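/- Under Condition (★), for every integer h ≥ 2, ∑_{p : N(p) ≤ x^{1/h}} 1/(N(p)·(1 − N(p)^{−1/h} + N(p)^{−1})) = log log x + 𝔇₁ + O_h(1/log x) as x → ∞, where the implied constant depends only on h and the data P, N, κ, θ. -/

import Mathlib

open Filter Topology Asymptotics
open scoped Classical

noncomputable section

/-- The norm on the free abelian monoid `P →₀ ℕ`, extended multiplicatively
from the norm `N` on the prime elements. -/
def Nm {P : Type*} (N : P → ℕ) (m : P →₀ ℕ) : ℕ :=
  m.prod fun p k => N p ^ k

/-- The number of distinct prime elements generating `m`. -/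
def omegaM {P : Type*} (m : P →₀ ℕ) : ℕ := m.support.card

/-- `m` is `h`-free: every multiplicity is at most `h - 1`. -/
def HFree {P : Type*} (h : ℕ) (m : P →₀ ℕ) : Prop := ∀ p, m p ≤ h - 1

/-- `m` is `h`-full: every nonzero multiplicity is at least `h`. -/
def HFull {P : Type*} (h : ℕ) (m : P →₀ ℕ) : Prop := ∀ p, m p = 0 ∨ h ≤ m p

/-- Condition (★): `#{m : N(m) ≤ x} = κ·x + O(x^θ)` with `κ > 0`, `0 ≤ θ < 1`. -/
def StarCond {P : Type*} (N : P → ℕ) (κ θ : ℝ) : Prop :=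
  0 < κ ∧ 0 ≤ θ ∧ θ < 1 ∧
    (fun x : ℝ => (({m : P →₀ ℕ | (Nm N m : ℝ) ≤ x}.ncard : ℝ) - κ * x))
      =O[atTop] fun x : ℝ => x ^ θ

/-- The generalized zeta function `ζ_M(s) = ∑_m N(m)^{-s}`. -/
def zetaM {P : Type*} (N : P → ℕ) (s : ℝ) : ℝ :=
  ∑' m : P →₀ ℕ, 1 / (Nm N m : ℝ) ^ s

/-- The constant `γ_h`. -/
def gammah {P : Type*} (N : P → ℕ) (h : ℕ) : ℝ :=
  ∏' p : P, (1 + ((N p : ℝ) - (N p : ℝ) ^ (1 / (h : ℝ))) /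
    ((N p : ℝ) ^ 2 * ((N p : ℝ) ^ (1 / (h : ℝ)) - 1)))

/-- `A` is the Mertens constant `𝔄` of the prime system:
`𝔄 = lim (∑_{N(p) ≤ x} 1/N(p) − log log x)`. -/
def IsMertens {P : Type*} (N : P → ℕ) (A : ℝ) : Prop :=
  Tendsto (fun x : ℝ =>
      (∑ᶠ p ∈ {p : P | (N p : ℝ) ≤ x}, 1 / (N p : ℝ)) - Real.log (Real.log x))
    atTop (𝓝 A)

/-- The constant `𝔅 = -π²/6`. -/
def Bconst : ℝ := -(Real.pi ^ 2) / 6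

/-- The constant `ℭ₁`, given the Mertens constant `A`. -/
def C1const {P : Type*} (N : P → ℕ) (h : ℕ) (A : ℝ) : ℝ :=
  A - ∑' p : P, ((N p : ℝ) - 1) / ((N p : ℝ) * ((N p : ℝ) ^ h - 1))

/-- The constant `ℭ₂`, given the Mertens constant `A`. -/
def C2const {P : Type*} (N : P → ℕ) (h : ℕ) (A : ℝ) : ℝ :=
  C1const N h A ^ 2 + C1const N h A + Bconst -
    ∑' p : P, (((N p : ℝ) ^ (h - 1) - 1) / ((N p : ℝ) ^ h - 1)) ^ 2

/-- The convergent series `𝔏_h(r)`. -/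
def LhSum {P : Type*} (N : P → ℕ) (h : ℕ) (r : ℝ) : ℝ :=
  ∑' p : P, 1 / ((N p : ℝ) ^ (r / (h : ℝ) - 1) *
    ((N p : ℝ) - (N p : ℝ) ^ (1 - 1 / (h : ℝ)) + 1))

/-- The constant `𝔇₁`, given the Mertens constant `A`. -/
def D1const {P : Type*} (N : P → ℕ) (h : ℕ) (A : ℝ) : ℝ :=
  A - Real.log (h : ℝ) + LhSum N h ((h : ℝ) + 1) - LhSum N h (2 * (h : ℝ))

/-- The constant `𝔇₂`, given the Mertens constant `A`. -/
def D2const {P : Type*} (N : P → ℕ) (h : ℕ) (A : ℝ) : ℝ :=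
  D1const N h A ^ 2 + D1const N h A + Bconst -
    ∑' p : P, (1 / ((N p : ℝ) - (N p : ℝ) ^ (1 - 1 / (h : ℝ)) + 1)) ^ 2

/-- The error term `R_{S_h}(x)` for `h`-free counts. -/
def RSfree (h : ℕ) (θ : ℝ) (x : ℝ) : ℝ :=
  if 1 / (h : ℝ) < θ then x ^ θ
  else if 1 / (h : ℝ) = θ then x ^ (1 / (h : ℝ)) * Real.log x
  else x ^ (1 / (h : ℝ))

/-- The error term `R_{N_h}(x)` for `h`-full counts. -/
def RNfull (h : ℕ) (θ : ℝ) (x : ℝ) : ℝ :=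
  if (h : ℝ) / ((h : ℝ) + 1) < θ then x ^ (θ / (h : ℝ))
  else if ∃ i : ℕ, 1 ≤ i ∧ i ≤ h - 1 ∧ θ = (h : ℝ) / ((h : ℝ) + (i : ℝ)) then
    x ^ (1 / ((h : ℝ) + 1)) * Real.log x
  else x ^ (1 / ((h : ℝ) + 1))

/-!
Write `q = N(p)`, `a = 1 / h` and `D = q - q ^ (1 - a) + 1`. Then `q (1 - q ^ (-a) + q⁻¹) = D`
and `1 / D = 1 / q + 1 / (q ^ a D) - 1 / (q D)`. The last two terms sum to `𝔏_h(h + 1)` and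
`𝔏_h(2h)`, with tails `O(1 / log y)` because the series still converge after multiplication by
`log q`. So everything rests on `∑_{N(p) ≤ y} 1 / N(p) = log log y + 𝔄 + O(1 / log y)`, applied at
`y = x ^ (1 / h)`, which also produces the constant `-log h`. This estimate follows by partial
summation from Mertens' first theorem `∑_{N(p) ≤ x} log N(p) / N(p) = log x + O(1)`.

For the first theorem, Condition (★) yields asymptotics with power-saving errors for the sums of
`1`, `1 / N(m)` and `log N(m) / N(m)` over `N(m) ≤ y`. A suitable combination `F(y)` of the three
has no main term, hence is `O(y ^ η)` with `η < 1`, and so `∑_d μ(d) F(x / d) = O(x)`. Möbius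
inversion evaluates the same sum as `x ∑_{N(n) ≤ x} Λ(n) / N(n) - x log x + O(x)`.
-/

section SummationByParts

open MeasureTheory Set

variable {ι : Type*} (ν : ι → ℕ) [Northcott ν]

/-- The finite set of indices of norm at most `x`, over which summatory functions are taken. The
norm is `ℕ`-valued and the cutoff `x` is real, as in the counting function of Condition (★). -/
def normLE (x : ℝ) : Finset ι :=
  ((Northcott.finite_le (h := ν) ⌊x⌋₊).subset
    fun i (hi : (ν i : ℝ) ≤ x) => Nat.le_floor hi).toFinset

variable {ν}

@[simp]
theorem mem_normLE {x : ℝ} {i : ι} : i ∈ normLE ν x ↔ (ν i : ℝ) ≤ x :=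
  Set.Finite.mem_toFinset _

theorem normLE_mono {x y : ℝ} (hxy : x ≤ y) : normLE ν x ⊆ normLE ν y := fun i hi => by
  rw [mem_normLE] at hi ⊢
  exact hi.trans hxy

theorem coe_normLE (x : ℝ) : (normLE ν x : Set ι) = {i | (ν i : ℝ) ≤ x} := by
  ext i
  simp

theorem finsum_mem_norm_le (g : ι → ℝ) (x : ℝ) :
    ∑ᶠ i ∈ {i | (ν i : ℝ) ≤ x}, g i = ∑ i ∈ normLE ν x, g i := by
  rw [← coe_normLE, finsum_mem_coe_finset]

theorem exists_subset_normLE (u : Finset ι) : ∃ x : ℝ, 1 ≤ x ∧ u ⊆ normLE ν x := by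
  refine ⟨(u.sup ν + 1 : ℕ), by simp, fun i hi => ?_⟩
  rw [mem_normLE, Nat.cast_le]
  exact (Finset.le_sup hi).trans (Nat.le_succ _)

theorem sum_normLE_eq_sum_fiber (w : ι → ℝ) (g : ℝ → ℝ) {x : ℝ} (hx : 0 ≤ x) :
    ∑ i ∈ normLE ν x, g (ν i) * w i =
      ∑ n ∈ Finset.Icc 0 ⌊x⌋₊, g n * ∑ i ∈ normLE ν n with ν i = n, w i := by
  rw [← Finset.sum_fiberwise_of_maps_to (g := ν) (t := Finset.Icc 0 ⌊x⌋₊)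
    fun i hi => Finset.mem_Icc.2 ⟨Nat.zero_le _, Nat.le_floor (mem_normLE.1 hi)⟩]
  refine Finset.sum_congr rfl fun n hn => ?_
  have hnx : (n : ℝ) ≤ x := (Nat.le_floor_iff hx).1 (Finset.mem_Icc.1 hn).2
  have hfiber : {i ∈ normLE ν x | ν i = n} = {i ∈ normLE ν n | ν i = n} := by
    ext i
    simp only [Finset.mem_filter, mem_normLE]
    exact and_congr_left fun hi => by simp [hi, hnx]
  rw [hfiber, Finset.mul_sum]
  exact Finset.sum_congr rfl fun i hi => by rw [(Finset.mem_filter.1 hi).2]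

theorem sum_normLE_eq_sum_fiber_one (w : ι → ℝ) {x : ℝ} (hx : 0 ≤ x) :
    ∑ i ∈ normLE ν x, w i =
      ∑ n ∈ Finset.Icc 0 ⌊x⌋₊, ∑ i ∈ normLE ν n with ν i = n, w i := by
  simpa using sum_normLE_eq_sum_fiber w (fun _ => 1) hx

theorem intervalIntegrable_mul_sum_normLE (w : ι → ℝ) {g : ℝ → ℝ} {x y : ℝ} (hx : 0 ≤ x)
    (hxy : x ≤ y) (hg : ContinuousOn g (Icc x y)) :
    IntervalIntegrable (fun t => g t * ∑ i ∈ normLE ν t, w i) volume x y := by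
  rw [intervalIntegrable_iff_integrableOn_Icc_of_le hxy]
  refine (integrableOn_congr_fun (fun t ht => ?_) measurableSet_Icc).1
    (integrableOn_mul_sum_Icc (fun n : ℕ => ∑ i ∈ normLE ν n with ν i = n, w i) (m := 0) hx
      (hg.integrableOn_Icc (μ := volume)))
  simp only [sum_normLE_eq_sum_fiber_one w (hx.trans ht.1)]

theorem sum_normLE_mul_sub_eq_sub_integral (w : ι → ℝ) {f f' : ℝ → ℝ} {x y : ℝ} (hx : 0 ≤ x)
    (hxy : x ≤ y) (hf : ∀ t ∈ Icc x y, HasDerivAt f (f' t) t) (hf' : ContinuousOn f' (Icc x y)) :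
    ∑ i ∈ normLE ν y, f (ν i) * w i - ∑ i ∈ normLE ν x, f (ν i) * w i =
      f y * ∑ i ∈ normLE ν y, w i - f x * ∑ i ∈ normLE ν x, w i
        - ∫ t in x..y, f' t * ∑ i ∈ normLE ν t, w i := by
  have hderiv : EqOn (deriv f) f' (Icc x y) := fun t ht => (hf t ht).deriv
  have hintegral : ∫ t in x..y, f' t * ∑ i ∈ normLE ν t, w i = ∫ t in Ioc x y, deriv f t *
      ∑ n ∈ Finset.Icc 0 ⌊t⌋₊, ∑ i ∈ normLE ν n with ν i = n, w i := by
    rw [intervalIntegral.integral_of_le hxy]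
    refine setIntegral_congr_fun measurableSet_Ioc fun t ht => ?_
    simp only [hderiv (Ioc_subset_Icc_self ht),
      sum_normLE_eq_sum_fiber_one w (hx.trans ht.1.le)]
  have hy := hx.trans hxy
  rw [hintegral, sum_normLE_eq_sum_fiber w f hx, sum_normLE_eq_sum_fiber w f hy,
    sum_normLE_eq_sum_fiber_one w hx, sum_normLE_eq_sum_fiber_one w hy,
    ← sum_mul_eq_sub_sub_integral_mul _ hx hxy (fun t ht => (hf t ht).differentiableAt)
      ((integrableOn_congr_fun hderiv measurableSet_Icc).2 hf'.integrableOn_Icc),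
    sub_eq_iff_eq_add']
  simp only [← Nat.range_succ_eq_Icc_zero, ← Finset.Ico_add_one_add_one_eq_Ioc]
  exact (Finset.sum_range_add_sum_Ico _ (Nat.succ_le_succ (Nat.floor_le_floor hxy))).symm

theorem sum_normLE_mul_sub_sub_eq_sub_integral (w : ι → ℝ) {f f' M M' Φ : ℝ → ℝ} {x y : ℝ}
    (hx : 0 ≤ x) (hxy : x ≤ y) (hf : ∀ t ∈ Icc x y, HasDerivAt f (f' t) t)
    (hf' : ContinuousOn f' (Icc x y)) (hM : ∀ t ∈ Icc x y, HasDerivAt M (M' t) t)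
    (hΦ : ∀ t ∈ Icc x y, HasDerivAt Φ (f t * M' t) t) :
    (∑ i ∈ normLE ν y, f (ν i) * w i - Φ y) - (∑ i ∈ normLE ν x, f (ν i) * w i - Φ x) =
      f y * (∑ i ∈ normLE ν y, w i - M y) - f x * (∑ i ∈ normLE ν x, w i - M x)
        - ∫ t in x..y, f' t * (∑ i ∈ normLE ν t, w i - M t) := by
  have hMc : ContinuousOn M (Icc x y) := fun t ht => (hM t ht).continuousAt.continuousWithinAt
  have hf'M : IntervalIntegrable (fun t => f' t * M t) volume x y :=
    ContinuousOn.intervalIntegrable (by rw [uIcc_of_le hxy]; exact hf'.mul hMc)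
  have hparts : ∫ t in x..y, f' t * M t = (f y * M y - Φ y) - (f x * M x - Φ x) := by
    refine intervalIntegral.integral_eq_sub_of_hasDerivAt (f := fun t => f t * M t - Φ t)
      (fun t ht => ?_) hf'M
    rw [uIcc_of_le hxy] at ht
    exact (((hf t ht).mul (hM t ht)).sub (hΦ t ht)).congr_deriv (add_sub_cancel_right _ _)
  simp only [mul_sub]
  rw [intervalIntegral.integral_sub (intervalIntegrable_mul_sum_normLE (ν := ν) w hx hxy hf')
    hf'M, hparts]
  linear_combination sum_normLE_mul_sub_eq_sub_integral (ν := ν) w hx hxy hf hf'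

theorem abs_sum_normLE_mul_sub_sub_le (w : ι → ℝ) {f f' M M' Φ B B' : ℝ → ℝ} {x y : ℝ}
    (hx : 0 ≤ x) (hxy : x ≤ y) (hf : ∀ t ∈ Icc x y, HasDerivAt f (f' t) t)
    (hf' : ContinuousOn f' (Icc x y)) (hM : ∀ t ∈ Icc x y, HasDerivAt M (M' t) t)
    (hΦ : ∀ t ∈ Icc x y, HasDerivAt Φ (f t * M' t) t)
    (hB : ∀ t ∈ Icc x y, HasDerivAt B (B' t) t)
    (hfB : ∀ t ∈ Icc x y, |f t * (∑ i ∈ normLE ν t, w i - M t)| ≤ B t)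
    (hf'B : ∀ t ∈ Icc x y, |f' t * (∑ i ∈ normLE ν t, w i - M t)| ≤ -B' t) :
    |(∑ i ∈ normLE ν y, f (ν i) * w i - Φ y) - (∑ i ∈ normLE ν x, f (ν i) * w i - Φ x)|
      ≤ 2 * B x := by
  have hB'int : IntervalIntegrable (fun t => -B' t) volume x y := by
    refine intervalIntegral.intervalIntegrable_deriv_of_nonneg (g := fun t => -B t) ?_
      (fun t ht => ?_) fun t ht => ?_
    · rw [uIcc_of_le hxy]
      exact fun t ht => (hB t ht).continuousAt.neg.continuousWithinAt
    all_goals rw [min_eq_left hxy, max_eq_right hxy] at ht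
    · exact (hB t (Ioo_subset_Icc_self ht)).neg
    · exact (abs_nonneg _).trans (hf'B t (Ioo_subset_Icc_self ht))
  have hintegral : |∫ t in x..y, f' t * (∑ i ∈ normLE ν t, w i - M t)| ≤ B x - B y := by
    rw [← Real.norm_eq_abs]
    calc ‖∫ t in x..y, f' t * (∑ i ∈ normLE ν t, w i - M t)‖
      _ ≤ ∫ t in x..y, -B' t := intervalIntegral.norm_integral_le_of_norm_le hxy
            (Eventually.of_forall fun t ht => hf'B t (Ioc_subset_Icc_self ht)) hB'int
      _ = -B y - -B x := intervalIntegral.integral_eq_sub_of_hasDerivAt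
            (fun t ht => (hB t (uIcc_of_le hxy ▸ ht)).neg) hB'int
      _ = B x - B y := by ring
  rw [sum_normLE_mul_sub_sub_eq_sub_integral w hx hxy hf hf' hM hΦ]
  have hendx := abs_le.1 (hfB x (left_mem_Icc.2 hxy))
  have hendy := abs_le.1 (hfB y (right_mem_Icc.2 hxy))
  have hintegral' := abs_le.1 hintegral
  rw [abs_le]
  constructor <;> linarith

end SummationByParts

section Limits

variable {H B : ℝ → ℝ} {a : ℝ}

theorem exists_tendsto_of_abs_sub_le (hH : ∀ x y, a ≤ x → x ≤ y → |H y - H x| ≤ B x)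
    (hB : Tendsto B atTop (𝓝 0)) : ∃ b, Tendsto H atTop (𝓝 b) := by
  refine cauchySeq_tendsto_of_complete (Metric.cauchySeq_iff'.2 fun ε hε => ?_)
  obtain ⟨x, hBx, hax⟩ := ((hB.eventually_lt_const hε).and (eventually_ge_atTop a)).exists
  exact ⟨x, fun y hxy => (hH x y hax hxy).trans_lt hBx⟩

theorem abs_sub_le_of_tendsto {b : ℝ} (hH : ∀ x y, a ≤ x → x ≤ y → |H y - H x| ≤ B x)
    (hb : Tendsto H atTop (𝓝 b)) {x : ℝ} (hx : a ≤ x) : |H x - b| ≤ B x := by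
  rw [abs_sub_comm]
  exact le_of_tendsto (hb.sub_const (H x)).abs
    ((eventually_ge_atTop x).mono fun y hxy => hH x y hx hxy)

end Limits

section CountingFunction

open Set

theorem isBigO_rpow_rpow {a b : ℝ} (hab : a ≤ b) :
    (fun x : ℝ => x ^ a) =O[𝓟 (Ici 1)] fun x => x ^ b :=
  isBigO_principal.2 ⟨1, fun x hx => by
    rw [one_mul, Real.norm_of_nonneg (Real.rpow_nonneg (zero_le_one.trans hx) _),
      Real.norm_of_nonneg (Real.rpow_nonneg (zero_le_one.trans hx) _)]
    exact Real.rpow_le_rpow_of_exponent_le hx hab⟩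

theorem isBigO_const_rpow (c : ℝ) {a : ℝ} (ha : 0 ≤ a) :
    (fun _ : ℝ => c) =O[𝓟 (Ici 1)] fun x => x ^ a := by
  simpa using (isBigO_const_one ℝ c (𝓟 (Ici (1 : ℝ)))).trans
    (by simpa using isBigO_rpow_rpow ha)

theorem isBigO_log_rpow {σ : ℝ} (hσ : 0 < σ) :
    Real.log =O[𝓟 (Ici 1)] fun x => x ^ σ :=
  isBigO_principal.2 ⟨σ⁻¹, fun x hx => by
    have hx0 : (0 : ℝ) ≤ x := zero_le_one.trans hx
    rw [Real.norm_of_nonneg (Real.log_nonneg hx), Real.norm_of_nonneg (Real.rpow_nonneg hx0 _),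
      inv_mul_eq_div]
    exact Real.log_le_rpow_div hx0 hσ⟩

variable {ι : Type*} {ν : ι → ℕ} [Northcott ν] {κ θ s : ℝ}

/-- The number of elements of norm at most `x` is `κ x + O(x ^ θ)`, uniformly for `x ≥ 1`. This is
Condition (★) for an arbitrary norm; the bound on all of `[1, ∞)`, rather than near infinity, lets
it be applied to `x / n` for every `n ≤ x`. -/
def HasLinearCount (ν : ι → ℕ) [Northcott ν] (κ θ : ℝ) : Prop :=
  (fun x => ((normLE ν x).card : ℝ) - κ * x) =O[𝓟 (Ici 1)] fun x => x ^ θ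

namespace HasLinearCount

theorem exists_abs_sum_normLE_sub_sub_le {f f' Φ : ℝ → ℝ} (hcount : HasLinearCount ν κ θ)
    (hs : θ < s) (hf : ∀ t ∈ Ici 1, HasDerivAt f (f' t) t) (hf' : ContinuousOn f' (Ici 1))
    (hΦ : ∀ t ∈ Ici 1, HasDerivAt Φ (f t) t) (hfO : f =O[𝓟 (Ici 1)] fun t => t ^ (-s))
    (hf'O : f' =O[𝓟 (Ici 1)] fun t => t ^ (-s - 1)) :
    ∃ K, ∀ x y, 1 ≤ x → x ≤ y → |(∑ i ∈ normLE ν y, f (ν i) - κ * Φ y)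
      - (∑ i ∈ normLE ν x, f (ν i) - κ * Φ x)| ≤ 2 * (K * x ^ (θ - s)) := by
  have hsθ : 0 < s - θ := sub_pos.2 hs
  obtain ⟨C, hC, hfC⟩ := (hfO.mul hcount).exists_nonneg
  obtain ⟨C', hC', hf'C'⟩ := (hf'O.mul hcount).exists_nonneg
  rw [isBigOWith_principal] at hfC hf'C'
  set K := C + C' / (s - θ)
  have hCK : C ≤ K := le_add_of_nonneg_right (by positivity)
  have hC'K : C' ≤ K * (s - θ) := (div_le_iff₀ hsθ).1 (le_add_of_nonneg_left hC)
  refine ⟨K, fun x y hx hxy => ?_⟩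
  have hIcc : Icc x y ⊆ Ici 1 := fun t ht => hx.trans ht.1
  have hpos : ∀ t ∈ Icc x y, 0 < t := fun t ht => one_pos.trans_le (hIcc ht)
  have hnorm : ∀ t ∈ Icc x y, ∀ r : ℝ, ‖t ^ r * t ^ θ‖ = t ^ (r + θ) := fun t ht r => by
    rw [← Real.rpow_add (hpos t ht), Real.norm_of_nonneg (Real.rpow_nonneg (hpos t ht).le _)]
  have := abs_sum_normLE_mul_sub_sub_le (ν := ν) (fun _ => 1) (f := f) (M := fun t => κ * t)
    (M' := fun _ => κ) (Φ := fun t => κ * Φ t)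
    (B := fun t => K * t ^ (θ - s)) (B' := fun t => K * ((θ - s) * t ^ (θ - s - 1)))
    (zero_le_one.trans hx) hxy (fun t ht => hf t (hIcc ht)) (hf'.mono hIcc)
    (fun t _ => by simpa using (hasDerivAt_id t).const_mul κ)
    (fun t ht => by simpa [mul_comm] using (hΦ t (hIcc ht)).const_mul κ)
    (fun t ht => (Real.hasDerivAt_rpow_const (Or.inl (hpos t ht).ne')).const_mul K)
    (fun t ht => ?_) fun t ht => ?_
  · simpa using this
  · have := hfC t (hIcc ht)
    rw [hnorm t ht, neg_add_eq_sub] at this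
    simpa using this.trans
      (mul_le_mul_of_nonneg_right hCK (Real.rpow_nonneg (hpos t ht).le _))
  · have := hf'C' t (hIcc ht)
    rw [hnorm t ht, show -s - 1 + θ = θ - s - 1 by ring] at this
    refine Eq.trans_le ?_ (this.trans ((mul_le_mul_of_nonneg_right hC'K
      (Real.rpow_nonneg (hpos t ht).le _)).trans_eq (by ring)))
    simp

theorem exists_isBigO_sum_normLE {f f' Φ : ℝ → ℝ} (hcount : HasLinearCount ν κ θ) (hs : θ < s)
    (hf : ∀ t ∈ Ici 1, HasDerivAt f (f' t) t) (hf' : ContinuousOn f' (Ici 1))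
    (hΦ : ∀ t ∈ Ici 1, HasDerivAt Φ (f t) t) (hfO : f =O[𝓟 (Ici 1)] fun t => t ^ (-s))
    (hf'O : f' =O[𝓟 (Ici 1)] fun t => t ^ (-s - 1)) :
    ∃ b, (fun x => ∑ i ∈ normLE ν x, f (ν i) - κ * Φ x - b) =O[𝓟 (Ici 1)]
      fun x => x ^ (θ - s) := by
  obtain ⟨K, hdiff⟩ := exists_abs_sum_normLE_sub_sub_le hcount hs hf hf' hΦ hfO hf'O
  have htend : Tendsto (fun x : ℝ => 2 * (K * x ^ (θ - s))) atTop (𝓝 0) := by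
    simpa using ((tendsto_rpow_neg_atTop (sub_pos.2 hs)).const_mul K).const_mul 2
  obtain ⟨b, hb⟩ := exists_tendsto_of_abs_sub_le hdiff htend
  refine ⟨b, isBigO_principal.2 ⟨2 * K, fun x hx => ?_⟩⟩
  rw [Real.norm_of_nonneg (Real.rpow_nonneg (zero_le_one.trans hx) _), mul_assoc]
  exact abs_sub_le_of_tendsto hdiff hb hx

theorem exists_isBigO_sum_rpow_neg (hcount : HasLinearCount ν κ θ) (hs : θ < s) (hs1 : s ≠ 1) :
    ∃ b, (fun x => ∑ i ∈ normLE ν x, (ν i : ℝ) ^ (-s) - κ * (x ^ (1 - s) / (1 - s)) - b)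
      =O[𝓟 (Ici 1)] fun x => x ^ (θ - s) := by
  have hpos : ∀ t ∈ Ici (1 : ℝ), t ≠ 0 := fun t ht => (one_pos.trans_le ht).ne'
  refine exists_isBigO_sum_normLE (f := fun t => t ^ (-s)) hcount hs
    (fun t ht => Real.hasDerivAt_rpow_const (Or.inl (hpos t ht)))
    (continuousOn_const.mul (continuousOn_id.rpow_const fun t ht => Or.inl (hpos t ht)))
    (fun t ht => ?_) (isBigO_refl _ _) (isBigO_const_mul_self _ _ _)
  refine ((Real.hasDerivAt_rpow_const (Or.inl (hpos t ht))).div_const _).congr_deriv ?_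
  rw [mul_div_cancel_left₀ _ (sub_ne_zero.2 hs1.symm)]
  ring_nf

theorem isBigO_sum_rpow_neg (hcount : HasLinearCount ν κ θ) (hs : θ < s) (hs1 : s ≠ 1)
    {a : ℝ} (ha : 0 ≤ a) (hsa : 1 - s ≤ a) :
    (fun x => ∑ i ∈ normLE ν x, (ν i : ℝ) ^ (-s)) =O[𝓟 (Ici 1)] fun x => x ^ a := by
  obtain ⟨b, hb⟩ := hcount.exists_isBigO_sum_rpow_neg hs hs1
  have hmain : (fun x : ℝ => κ * (x ^ (1 - s) / (1 - s))) =O[𝓟 (Ici 1)] fun x => x ^ a :=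
    ((isBigO_const_mul_self (κ / (1 - s)) _ _).congr_left fun x => by ring).trans
      (isBigO_rpow_rpow hsa)
  refine ((hb.trans (isBigO_rpow_rpow (by linarith))).add
    ((isBigO_const_rpow b ha).add hmain)).congr_left fun x => ?_
  ring

theorem summable_rpow_neg (hcount : HasLinearCount ν κ θ) (hθ : θ ≤ 1) (hs : 1 < s) :
    Summable fun i => (ν i : ℝ) ^ (-s) := by
  obtain ⟨C, hC⟩ := isBigO_principal.1
    (hcount.isBigO_sum_rpow_neg (hθ.trans_lt hs) hs.ne' le_rfl (sub_nonpos.2 hs.le))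
  refine summable_of_sum_le (c := C) (fun i => by positivity) fun u => ?_
  obtain ⟨x, hx, hu⟩ := exists_subset_normLE (ν := ν) u
  refine (Finset.sum_le_sum_of_subset_of_nonneg hu fun i _ _ => by positivity).trans ?_
  simpa using (le_abs_self _).trans (hC x hx)

theorem summable_log_mul_rpow_neg (hcount : HasLinearCount ν κ θ) (hθ : θ ≤ 1) (hs : 1 < s) :
    Summable fun i => Real.log (ν i) * (ν i : ℝ) ^ (-s) := by
  obtain ⟨r, hr1, hrs⟩ := exists_between hs
  refine .of_nonneg_of_le
    (fun i => mul_nonneg (Real.log_natCast_nonneg _) (Real.rpow_nonneg (Nat.cast_nonneg _) _))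
    (fun i => ?_) ((hcount.summable_rpow_neg hθ hr1).mul_left (s - r)⁻¹)
  rcases (ν i).eq_zero_or_pos with hi | hi
  · rw [hi, Nat.cast_zero, Real.log_zero, zero_mul]
    exact mul_nonneg (inv_nonneg.2 (sub_nonneg.2 hrs.le)) (Real.rpow_nonneg le_rfl _)
  calc Real.log (ν i) * (ν i : ℝ) ^ (-s)
    _ ≤ (ν i : ℝ) ^ (s - r) / (s - r) * (ν i : ℝ) ^ (-s) := by
      gcongr
      exact Real.log_le_rpow_div (Nat.cast_nonneg _) (sub_pos.2 hrs)
    _ = (s - r)⁻¹ * (ν i : ℝ) ^ (-r) := by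
      rw [show -r = s - r + -s by ring, Real.rpow_add (Nat.cast_pos.2 hi)]
      ring

theorem exists_isBigO_sum_inv (hcount : HasLinearCount ν κ θ) (hθ : θ < 1) :
    ∃ b, (fun x => ∑ i ∈ normLE ν x, (ν i : ℝ)⁻¹ - κ * Real.log x - b)
      =O[𝓟 (Ici 1)] fun x => x ^ (θ - 1) := by
  have hpos : ∀ t ∈ Ici (1 : ℝ), t ≠ 0 := fun t ht => (one_pos.trans_le ht).ne'
  refine exists_isBigO_sum_normLE hcount hθ (fun t ht => hasDerivAt_inv (hpos t ht)) ?_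
    (fun t ht => Real.hasDerivAt_log (hpos t ht)) ?_ ?_
  · exact ((continuousOn_id.pow 2).inv₀ fun t ht => pow_ne_zero 2 (hpos t ht)).neg
  · simpa only [Real.rpow_neg_one] using isBigO_refl _ _
  · refine isBigO_principal.2 ⟨1, fun t ht => ?_⟩
    rw [show (-1 - 1 : ℝ) = -(2 : ℕ) by norm_num, Real.rpow_neg (zero_le_one.trans ht),
      Real.rpow_natCast, norm_neg, one_mul]

theorem exists_isBigO_sum_log_div (hcount : HasLinearCount ν κ θ) {σ : ℝ} (hσ : 0 < σ)
    (hθ : θ + σ < 1) :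
    ∃ b, (fun x => ∑ i ∈ normLE ν x, Real.log (ν i) / ν i - κ * (Real.log x ^ 2 / 2) - b)
      =O[𝓟 (Ici 1)] fun x => x ^ (θ + σ - 1) := by
  have hpos : ∀ t ∈ Ici (1 : ℝ), 0 < t := fun t ht => one_pos.trans_le ht
  have hlog : ContinuousOn Real.log (Ici 1) :=
    Real.continuousOn_log.mono fun t ht => (hpos t ht).ne'
  have := exists_isBigO_sum_normLE (f := fun t => Real.log t / t) (s := 1 - σ)
    (f' := fun t => (1 - Real.log t) / t ^ 2) (Φ := fun t => Real.log t ^ 2 / 2) hcount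
    (by linarith) (fun t ht => ?_) ?_ (fun t ht => ?_) ?_ ?_
  · simpa only [sub_sub_eq_add_sub] using this
  · refine ((Real.hasDerivAt_log (hpos t ht).ne').div (hasDerivAt_id t)
      (hpos t ht).ne').congr_deriv ?_
    simp [inv_mul_cancel₀ (hpos t ht).ne']
  · exact (continuousOn_const.sub hlog).div (continuousOn_id.pow 2)
      fun t ht => pow_ne_zero 2 (hpos t ht).ne'
  · refine (((Real.hasDerivAt_log (hpos t ht).ne').pow 2).div_const 2).congr_deriv ?_
    simp only [Nat.cast_ofNat, Nat.add_one_sub_one, pow_one]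
    ring
  · refine ((isBigO_log_rpow hσ).mul (isBigO_refl (·⁻¹) _)).congr' .rfl ?_
    exact eventually_principal.2 fun t ht => by
      beta_reduce
      rw [neg_sub, Real.rpow_sub_one (hpos t ht).ne', div_eq_mul_inv]
  · refine (((isBigO_const_rpow 1 hσ.le).sub (isBigO_log_rpow hσ)).mul
      (isBigO_refl (fun t => (t ^ 2)⁻¹) _)).congr' .rfl ?_
    exact eventually_principal.2 fun t ht => by
      beta_reduce
      rw [show -(1 - σ) - 1 = σ - (2 : ℕ) by push_cast; ring,
        Real.rpow_sub_natCast (hpos t ht).ne', div_eq_mul_inv]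

end HasLinearCount

end CountingFunction

section InjectiveReindexing

variable {ι ι' : Type*} {ν : ι → ℕ} [Northcott ν]

theorem northcott_comp_of_injective {e : ι' → ι} (he : e.Injective) : Northcott (ν ∘ e) where
  finite_le b := (Northcott.finite_le (h := ν) b).preimage he.injOn

theorem sum_normLE_comp_le {ν' : ι' → ℕ} [Northcott ν'] {e : ι' → ι} (he : e.Injective)
    (hν' : ∀ i, ν (e i) = ν' i) {g : ι → ℝ} (hg : ∀ i, 0 ≤ g i) (x : ℝ) :
    ∑ i ∈ normLE ν' x, g (e i) ≤ ∑ i ∈ normLE ν x, g i := by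
  rw [← Finset.sum_image he.injOn]
  refine Finset.sum_le_sum_of_subset_of_nonneg (Finset.image_subset_iff.2 fun i hi => ?_)
    fun i _ _ => hg i
  rwa [mem_normLE, hν', ← mem_normLE]

end InjectiveReindexing

section FreeMonoid

open Set

variable {P : Type*} {N : P → ℕ} {κ θ : ℝ}

theorem Nm_zero : Nm N 0 = 1 :=
  Finsupp.prod_zero_index

theorem Nm_add (m n : P →₀ ℕ) : Nm N (m + n) = Nm N m * Nm N n :=
  Finsupp.prod_add_index' (fun _ => pow_zero _) fun _ => pow_add _

theorem Nm_single (p : P) (k : ℕ) : Nm N (Finsupp.single p k) = N p ^ k :=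
  Finsupp.prod_single_index (pow_zero _)

theorem Nm_pos (hN : ∀ p, 2 ≤ N p) (m : P →₀ ℕ) : 0 < Nm N m :=
  Finset.prod_pos fun p _ => pow_pos (two_pos.trans_le (hN p)) _

theorem northcott_of_northcott_Nm [Northcott (Nm N)] : Northcott N := by
  have : N = Nm N ∘ fun p => Finsupp.single p 1 := by
    ext p
    simp [Nm_single]
  rw [this]
  exact northcott_comp_of_injective (Finsupp.single_left_injective one_ne_zero)

namespace StarCond

theorem northcott (hstar : StarCond N κ θ) : Northcott (Nm N) := by
  obtain ⟨hκ, -, hθ, hcount⟩ := hstar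
  refine ⟨fun b => by_contra fun hinf => ?_⟩
  have hzero : (fun x : ℝ => ({m : P →₀ ℕ | (Nm N m : ℝ) ≤ x}.ncard : ℝ) - κ * x)
      =ᶠ[atTop] fun x => -κ * x := by
    filter_upwards [eventually_ge_atTop (b : ℝ)] with x hx
    rw [Set.Infinite.ncard fun hfin => hinf (hfin.subset fun m hm => ?_)]
    · simp
    · exact (Nat.cast_le.2 hm).trans hx
  have hlinear : (fun x : ℝ => x) =O[atTop] fun x : ℝ => x ^ θ :=
    (isBigO_const_mul_left_iff (neg_ne_zero.2 hκ.ne')).1 (hcount.congr' hzero .rfl)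
  have hsublinear : (fun x : ℝ => x ^ θ) =o[atTop] fun x => x := by
    refine (isLittleO_iff_tendsto' ?_).2 ((tendsto_rpow_neg_atTop (sub_pos.2 hθ)).congr' ?_)
    · filter_upwards [eventually_ne_atTop 0] with x hx h0 using absurd h0 hx
    · filter_upwards [eventually_ne_atTop 0] with x hx
      rw [neg_sub, Real.rpow_sub_one hx]
  exact isLittleO_irrefl (eventually_ne_atTop 0).frequently (hlinear.trans_isLittleO hsublinear)

theorem hasLinearCount [Northcott (Nm N)] (hstar : StarCond N κ θ) :
    HasLinearCount (Nm N) κ θ := by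
  obtain ⟨hκ, hθ, -, hcount⟩ := hstar
  simp only [← coe_normLE, Set.ncard_coe_finset] at hcount
  obtain ⟨C, hC⟩ := hcount.bound
  obtain ⟨x₀, hx₀⟩ := eventually_atTop.1 hC
  have hlarge : (fun x => ((normLE (Nm N) x).card : ℝ) - κ * x) =O[𝓟 (Ici x₀)] fun x => x ^ θ :=
    isBigO_principal.2 ⟨C, hx₀⟩
  have hsmall : (fun x => ((normLE (Nm N) x).card : ℝ) - κ * x) =O[𝓟 (Icc 1 x₀)]
      fun x => x ^ θ := by
    refine IsBigO.trans (g := fun _ => (1 : ℝ)) (isBigO_principal.2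
      ⟨(normLE (Nm N) x₀).card + κ * x₀, fun x hx => ?_⟩)
      ((isBigO_const_rpow 1 hθ).mono (principal_mono.2 Icc_subset_Ici_self))
    have hcard : ((normLE (Nm N) x).card : ℝ) ≤ (normLE (Nm N) x₀).card :=
      Nat.cast_le.2 (Finset.card_le_card (normLE_mono hx.2))
    have hκx : κ * x ≤ κ * x₀ := mul_le_mul_of_nonneg_left hx.2 hκ.le
    have hκx' : 0 ≤ κ * x := mul_nonneg hκ.le (zero_le_one.trans hx.1)
    rw [norm_one, mul_one, Real.norm_eq_abs, abs_le]
    constructor <;> linarith [Nat.cast_nonneg (α := ℝ) (normLE (Nm N) x).card]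
  refine (hsmall.sup hlarge).mono ?_
  rw [sup_principal]
  exact principal_mono.2 fun x hx => (le_total x x₀).imp (fun h => ⟨hx, h⟩) id

end StarCond

theorem summable_log_mul_prime_rpow_neg [Northcott (Nm N)] (hcount : HasLinearCount (Nm N) κ θ)
    (hθ : θ ≤ 1) {s : ℝ} (hs : 1 < s) :
    Summable fun p => Real.log (N p) * (N p : ℝ) ^ (-s) := by
  simpa [Function.comp_def, Nm_single] using
    (hcount.summable_log_mul_rpow_neg hθ hs).comp_injective
      (Finsupp.single_left_injective one_ne_zero)

end FreeMonoid

section MoebiusInversion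

theorem sum_powerset_neg_one_pow_card_real {P : Type*} (T : Finset P) :
    ∑ s ∈ T.powerset, (-1 : ℝ) ^ s.card = if T = ∅ then 1 else 0 := by
  exact_mod_cast congrArg (Int.cast : ℤ → ℝ) (Finset.sum_powerset_neg_one_pow_card (x := T))

theorem sum_powerset_neg_one_pow_card_mul_sum {P : Type*} (T : Finset P) (a : P → ℝ) :
    ∑ s ∈ T.powerset, (-1 : ℝ) ^ s.card * ∑ p ∈ s, a p =
      -∑ p ∈ T, if T = {p} then a p else 0 := by
  induction T using Finset.induction_on with
  | empty => simp
  | insert q T hqT _ =>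
    have hpair : ∀ s ∈ T.powerset, (-1 : ℝ) ^ (insert q s).card * ∑ p ∈ insert q s, a p =
        -((-1) ^ s.card * ∑ p ∈ s, a p) - (-1) ^ s.card * a q := by
      intro s hs
      have hqs : q ∉ s := fun h => hqT (Finset.mem_powerset.1 hs h)
      rw [Finset.card_insert_of_notMem hqs, Finset.sum_insert hqs]
      ring
    rw [Finset.sum_powerset_insert hqT, Finset.sum_congr rfl hpair, Finset.sum_sub_distrib,
      Finset.sum_neg_distrib, ← Finset.sum_mul, sum_powerset_neg_one_pow_card_real]
    rcases T.eq_empty_or_nonempty with rfl | hT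
    · simp
    have hne : ∀ p, insert q T ≠ {p} := fun p hp => by
      have := congrArg Finset.card hp
      rw [Finset.card_insert_of_notMem hqT, Finset.card_singleton] at this
      exact hT.card_pos.ne' (Nat.succ_injective this)
    simp [hT.ne_empty, hne]

variable {P : Type*} {N : P → ℕ}

/-- The squarefree element of the free abelian monoid with set of prime factors `s`. Sums of
`μ(d) g(d)` over the monoid are written as sums of `(-1) ^ #s * g (squarefreeElt s)` over
finite sets `s` of primes. -/
def squarefreeElt (s : Finset P) : P →₀ ℕ :=
  Finsupp.indicator s fun _ _ => 1

theorem squarefreeElt_apply (s : Finset P) (p : P) :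
    squarefreeElt s p = if p ∈ s then 1 else 0 := by
  simp [squarefreeElt, Finsupp.indicator_apply]

theorem support_squarefreeElt (s : Finset P) : (squarefreeElt s).support = s := by
  ext p
  simp [squarefreeElt_apply]

theorem squarefreeElt_injective : (squarefreeElt : Finset P → P →₀ ℕ).Injective := fun s t hst => by
  rw [← support_squarefreeElt s, hst, support_squarefreeElt]

theorem squarefreeElt_le_iff {s : Finset P} {n : P →₀ ℕ} :
    squarefreeElt s ≤ n ↔ s ⊆ n.support := by
  refine ⟨fun h p hp => ?_, fun h p => ?_⟩
  · have := h p
    rw [squarefreeElt_apply, if_pos hp] at this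
    exact Finsupp.mem_support_iff.2 (Nat.one_le_iff_ne_zero.1 this)
  · rw [squarefreeElt_apply]
    split_ifs with hp
    · exact Nat.one_le_iff_ne_zero.2 (Finsupp.mem_support_iff.1 (h hp))
    · exact Nat.zero_le _

theorem Nm_squarefreeElt (s : Finset P) : Nm N (squarefreeElt s) = ∏ p ∈ s, N p := by
  rw [Nm, Finsupp.prod, support_squarefreeElt]
  exact Finset.prod_congr rfl fun p hp => by rw [squarefreeElt_apply, if_pos hp, pow_one]

instance [Northcott (Nm N)] : Northcott (Nm N ∘ squarefreeElt) :=
  northcott_comp_of_injective squarefreeElt_injective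

variable [Northcott (Nm N)]

theorem sum_squarefree_sum_div_eq (hN : ∀ p, 2 ≤ N p) (G : Finset P → (P →₀ ℕ) → ℝ) (x : ℝ) :
    ∑ s ∈ normLE (Nm N ∘ squarefreeElt) x,
        ∑ m ∈ normLE (Nm N) (x / Nm N (squarefreeElt s)), G s (squarefreeElt s + m) =
      ∑ n ∈ normLE (Nm N) x, ∑ s ∈ n.support.powerset, G s n := by
  have hmem : ∀ s m, m ∈ normLE (Nm N) (x / Nm N (squarefreeElt s)) ↔
      squarefreeElt s + m ∈ normLE (Nm N) x := fun s m => by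
    rw [mem_normLE, mem_normLE, le_div_iff₀' (Nat.cast_pos.2 (Nm_pos hN _)), Nm_add, Nat.cast_mul]
  rw [Finset.sum_sigma', Finset.sum_sigma']
  refine Finset.sum_nbij' (fun q => ⟨squarefreeElt q.1 + q.2, q.1⟩)
    (fun q => ⟨q.2, q.1 - squarefreeElt q.2⟩) ?_ ?_ ?_ ?_ fun _ _ => rfl
  · rintro ⟨s, m⟩ h
    simp only [Finset.mem_sigma, Finset.mem_powerset] at h ⊢
    exact ⟨(hmem s m).1 h.2, squarefreeElt_le_iff.1 le_self_add⟩
  · rintro ⟨n, s⟩ h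
    simp only [Finset.mem_sigma, Finset.mem_powerset, ← squarefreeElt_le_iff] at h ⊢
    have hn : squarefreeElt s + (n - squarefreeElt s) ∈ normLE (Nm N) x := by
      rw [add_tsub_cancel_of_le h.2]
      exact h.1
    refine ⟨mem_normLE.2 (le_trans ?_ (mem_normLE.1 hn)), (hmem _ _).2 hn⟩
    rw [Nm_add]
    exact Nat.cast_le.2 (Nat.le_mul_of_pos_right _ (Nm_pos hN _))
  · rintro ⟨s, m⟩ -
    simp
  · rintro ⟨n, s⟩ h
    simp only [Finset.mem_sigma, Finset.mem_powerset, ← squarefreeElt_le_iff] at h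
    simp [add_tsub_cancel_of_le h.2]

end MoebiusInversion

section MertensFirst

open Set

/-- The summatory function that is Möbius-inverted in the proof of Mertens' first theorem. The
constants `β` and `c` are parameters, to be chosen so that the main terms of the three sums it
combines cancel. -/
def balancedLogSum {ι : Type*} (ν : ι → ℕ) [Northcott ν] (β c y : ℝ) : ℝ :=
  ∑ i ∈ normLE ν y, (y / ν i * (2 * Real.log (ν i) - Real.log y + β) - c)

theorem balancedLogSum_eq {ι : Type*} (ν : ι → ℕ) [Northcott ν] (β c y : ℝ) :
    balancedLogSum ν β c y = 2 * (y * ∑ i ∈ normLE ν y, Real.log (ν i) / ν i)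
      + (β - Real.log y) * (y * ∑ i ∈ normLE ν y, (ν i : ℝ)⁻¹) - c * (normLE ν y).card := by
  rw [balancedLogSum, Finset.sum_sub_distrib, Finset.sum_const, nsmul_eq_mul, mul_comm c,
    sub_left_inj, Finset.mul_sum, Finset.mul_sum, Finset.mul_sum, Finset.mul_sum,
    ← Finset.sum_add_distrib]
  exact Finset.sum_congr rfl fun i _ => by ring

theorem HasLinearCount.exists_balancedLogSum_isBigO {ι : Type*} {ν : ι → ℕ} [Northcott ν]
    {κ θ η : ℝ} (hcount : HasLinearCount ν κ θ) (hκ : κ ≠ 0) (hθη : θ < η) (hη : η < 1) :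
    ∃ β c, balancedLogSum ν β c =O[𝓟 (Ici 1)] fun y => y ^ η := by
  obtain ⟨σ, hσ, rfl⟩ : ∃ σ, 0 < σ ∧ θ + σ = η := ⟨η - θ, sub_pos.2 hθη, by ring⟩
  obtain ⟨b, hinv⟩ := hcount.exists_isBigO_sum_inv (hθη.trans hη)
  obtain ⟨b', hlog⟩ := hcount.exists_isBigO_sum_log_div hσ hη
  set β := b / κ
  set c := (2 * b' + β * b) / κ
  have hmul_rpow : ∀ r : ℝ, (fun y : ℝ => y * y ^ (r - 1)) =ᶠ[𝓟 (Ici 1)] fun y => y ^ r := fun r =>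
    eventually_principal.2 fun y hy => by
      beta_reduce
      rw [Real.rpow_sub_one (one_pos.trans_le hy).ne',
        mul_div_cancel₀ _ (one_pos.trans_le hy).ne']
  have hyinv := ((isBigO_refl (fun y : ℝ => y) _).mul hinv).congr' .rfl (hmul_rpow θ)
  have hylog := ((isBigO_refl (fun y : ℝ => y) _).mul hlog).congr' .rfl (hmul_rpow (θ + σ))
  have hβlog := ((isBigO_const_rpow β hσ.le).sub (isBigO_log_rpow hσ)).mul hyinv
  refine ⟨β, c, ?_⟩
  refine (((hylog.const_mul_left 2).add (hβlog.congr' .rfl ?_)).sub ((hcount.const_mul_left c).trans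
    (isBigO_rpow_rpow hθη.le))).congr_left fun y => ?_
  · exact eventually_principal.2 fun y hy => by
      beta_reduce
      rw [add_comm θ, Real.rpow_add (one_pos.trans_le hy)]
  · rw [balancedLogSum_eq]
    have hb : b = β * κ := (div_mul_cancel₀ _ hκ).symm
    have hc : 2 * b' + β * b = c * κ := (div_mul_cancel₀ _ hκ).symm
    linear_combination y * Real.log y * hb - y * hc

theorem HasLinearCount.isBigO_sum_abs_comp_div {ι : Type*} {ν : ι → ℕ} [Northcott ν] {κ θ η : ℝ}
    (hcount : HasLinearCount ν κ θ) (hν : ∀ i, 0 < ν i) (hθη : θ < η) (hη : η < 1) {F : ℝ → ℝ}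
    (hF : F =O[𝓟 (Ici 1)] fun y => y ^ η) :
    (fun x => ∑ i ∈ normLE ν x, |F (x / ν i)|) =O[𝓟 (Ici 1)] fun x => x := by
  obtain ⟨C, hC⟩ := isBigO_principal.1 hF
  have hbound : (fun x => ∑ i ∈ normLE ν x, |F (x / ν i)|) =O[𝓟 (Ici 1)]
      fun x => x ^ η * ∑ i ∈ normLE ν x, (ν i : ℝ) ^ (-η) := by
    refine isBigO_principal.2 ⟨C, fun x hx => ?_⟩
    have hx0 : (0 : ℝ) ≤ x := zero_le_one.trans hx
    rw [Real.norm_of_nonneg (mul_nonneg (Real.rpow_nonneg hx0 _)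
      (Finset.sum_nonneg fun i _ => by positivity)), Finset.mul_sum, Finset.mul_sum]
    refine norm_sum_le_of_le _ fun i hi => ?_
    have hνi : (0 : ℝ) < ν i := Nat.cast_pos.2 (hν i)
    have := hC (x / ν i) ((one_le_div hνi).2 (mem_normLE.1 hi))
    rw [Real.norm_of_nonneg (Real.rpow_nonneg (div_nonneg hx0 hνi.le) _),
      Real.div_rpow hx0 hνi.le, div_eq_mul_inv (x ^ η), ← Real.rpow_neg hνi.le] at this
    exact (norm_norm _).trans_le this
  refine hbound.trans (((isBigO_refl (fun x : ℝ => x ^ η) _).mul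
    (hcount.isBigO_sum_rpow_neg hθη hη.ne (sub_nonneg.2 hη.le) le_rfl)).congr' .rfl ?_)
  exact eventually_principal.2 fun x hx => by
    beta_reduce
    rw [← Real.rpow_add (one_pos.trans_le hx), add_sub_cancel, Real.rpow_one]

variable {P : Type*} {N : P → ℕ}

/-- The von Mangoldt function of the free abelian monoid: `log N(p)` at the powers `p ^ k` with
`k ≥ 1`, which are the elements with support `{p}`, and `0` elsewhere. -/
def mangoldt (N : P → ℕ) (n : P →₀ ℕ) : ℝ :=
  ∑ p ∈ n.support, if n.support = {p} then Real.log (N p) else 0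

theorem mangoldt_eq_neg_sum_log (hN : ∀ p, 2 ≤ N p) (n : P →₀ ℕ) :
    mangoldt N n =
      -∑ s ∈ n.support.powerset, (-1 : ℝ) ^ s.card * Real.log (Nm N (squarefreeElt s)) := by
  have hlog : ∀ s : Finset P, Real.log (Nm N (squarefreeElt s)) = ∑ p ∈ s, Real.log (N p) :=
    fun s => by
      rw [Nm_squarefreeElt, Nat.cast_prod, Real.log_prod fun p _ =>
        Nat.cast_ne_zero.2 (two_pos.trans_le (hN p)).ne']
  simp only [hlog]
  rw [sum_powerset_neg_one_pow_card_mul_sum, neg_neg, mangoldt]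

theorem sum_neg_one_pow_card_mul_sub_log (hN : ∀ p, 2 ≤ N p) (a b c : ℝ) (n : P →₀ ℕ) :
    ∑ s ∈ n.support.powerset,
        (-1 : ℝ) ^ s.card * (a * (b - Real.log (Nm N (squarefreeElt s))) - c) =
      a * mangoldt N n + if n = 0 then a * b - c else 0 := by
  have hsplit : ∀ s : Finset P,
      (-1 : ℝ) ^ s.card * (a * (b - Real.log (Nm N (squarefreeElt s))) - c) =
        (-1) ^ s.card * (a * b - c) - a * ((-1) ^ s.card * Real.log (Nm N (squarefreeElt s))) :=
    fun s => by ring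
  simp only [hsplit]
  rw [Finset.sum_sub_distrib, ← Finset.sum_mul, ← Finset.mul_sum,
    sum_powerset_neg_one_pow_card_real, mangoldt_eq_neg_sum_log hN, ite_mul, one_mul, zero_mul]
  simp only [Finsupp.support_eq_empty]
  ring

variable [Northcott (Nm N)]

theorem sum_neg_one_pow_card_mul_balancedLogSum (hN : ∀ p, 2 ≤ N p) (β c : ℝ) {x : ℝ}
    (hx : 1 ≤ x) :
    ∑ s ∈ normLE (Nm N ∘ squarefreeElt) x,
        (-1) ^ s.card * balancedLogSum (Nm N) β c (x / Nm N (squarefreeElt s)) =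
      x * ∑ n ∈ normLE (Nm N) x, mangoldt N n / Nm N n - x * Real.log x + β * x - c := by
  have hpos : ∀ n, (Nm N n : ℝ) ≠ 0 := fun n => Nat.cast_ne_zero.2 (Nm_pos hN n).ne'
  have hterm : ∀ s m, x / Nm N (squarefreeElt s) / Nm N m *
      (2 * Real.log (Nm N m) - Real.log (x / Nm N (squarefreeElt s)) + β) - c =
      x / Nm N (squarefreeElt s + m) * (2 * Real.log (Nm N (squarefreeElt s + m)) - Real.log x + β
        - Real.log (Nm N (squarefreeElt s))) - c := fun s m => by
    rw [Nm_add, Nat.cast_mul, Real.log_mul (hpos _) (hpos _),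
      Real.log_div (one_pos.trans_le hx).ne' (hpos _), div_div]
    ring
  simp only [balancedLogSum, Finset.mul_sum, hterm]
  rw [sum_squarefree_sum_div_eq hN fun s n => (-1) ^ s.card * (x / Nm N n *
    (2 * Real.log (Nm N n) - Real.log x + β - Real.log (Nm N (squarefreeElt s))) - c)]
  have hzero : (0 : P →₀ ℕ) ∈ normLE (Nm N) x := by simpa [Nm_zero] using hx
  simp only [sum_neg_one_pow_card_mul_sub_log hN]
  rw [Finset.sum_add_distrib, Finset.sum_ite_eq', if_pos hzero]
  simp only [Nm_zero, Nat.cast_one, Real.log_one, div_one, div_mul_eq_mul_div, mul_div_assoc,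
    ← Finset.mul_sum]
  ring

theorem isBigO_sum_neg_one_pow_card_mul {κ θ η : ℝ} (hcount : HasLinearCount (Nm N) κ θ)
    (hN : ∀ p, 2 ≤ N p) (hθη : θ < η) (hη : η < 1) {F : ℝ → ℝ}
    (hF : F =O[𝓟 (Ici 1)] fun y => y ^ η) :
    (fun x => ∑ s ∈ normLE (Nm N ∘ squarefreeElt) x,
      (-1) ^ s.card * F (x / Nm N (squarefreeElt s))) =O[𝓟 (Ici 1)] fun x => x := by
  refine IsBigO.trans (isBigO_principal.2 ⟨1, fun x _ => ?_⟩)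
    (hcount.isBigO_sum_abs_comp_div (Nm_pos hN) hθη hη hF)
  calc ‖∑ s ∈ normLE (Nm N ∘ squarefreeElt) x, (-1) ^ s.card * F (x / Nm N (squarefreeElt s))‖
    _ ≤ ∑ s ∈ normLE (Nm N ∘ squarefreeElt) x, |F (x / Nm N (squarefreeElt s))| :=
      norm_sum_le_of_le _ fun s _ => by simp
    _ ≤ ∑ n ∈ normLE (Nm N) x, |F (x / Nm N n)| :=
      sum_normLE_comp_le (ν' := Nm N ∘ squarefreeElt) squarefreeElt_injective (fun _ => rfl)
        (g := fun n => |F (x / Nm N n)|) (fun n => abs_nonneg _) x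
    _ ≤ 1 * ‖∑ n ∈ normLE (Nm N) x, |F (x / Nm N n)|‖ := by
      rw [one_mul]
      exact Real.le_norm_self _

theorem isBigO_sum_mangoldt_div {κ θ : ℝ} (hcount : HasLinearCount (Nm N) κ θ)
    (hN : ∀ p, 2 ≤ N p) (hκ : κ ≠ 0) (hθ : θ < 1) :
    (fun x => ∑ n ∈ normLE (Nm N) x, mangoldt N n / Nm N n - Real.log x) =O[𝓟 (Ici 1)]
      fun _ => (1 : ℝ) := by
  obtain ⟨η, hθη, hη⟩ := exists_between hθ
  obtain ⟨β, c, hF⟩ := hcount.exists_balancedLogSum_isBigO hκ hθη hη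
  have hx : (fun x : ℝ => x * (∑ n ∈ normLE (Nm N) x, mangoldt N n / Nm N n - Real.log x))
      =O[𝓟 (Ici 1)] fun x => x := by
    have hc : (fun _ : ℝ => c) =O[𝓟 (Ici 1)] fun x => x := by
      simpa using isBigO_const_rpow c zero_le_one
    refine (((isBigO_sum_neg_one_pow_card_mul hcount hN hθη hη hF).sub
      (isBigO_const_mul_self β _ _)).add hc).congr' ?_ .rfl
    exact eventually_principal.2 fun x hx => by
      beta_reduce
      rw [sum_neg_one_pow_card_mul_balancedLogSum hN β c hx]
      ring
  refine ((isBigO_refl (fun x : ℝ => x⁻¹) _).mul hx).congr' ?_ ?_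
  · exact eventually_principal.2 fun x hx => inv_mul_cancel_left₀ (one_pos.trans_le hx).ne' _
  · exact eventually_principal.2 fun x hx => inv_mul_cancel₀ (one_pos.trans_le hx).ne'

end MertensFirst

section PrimeSums

open Set

/-- The prime elements, as a subset of the free abelian monoid they generate. -/
def primeElts (P : Type*) : Set (P →₀ ℕ) :=
  range fun p => Finsupp.single p 1

variable {P : Type*} {N : P → ℕ}

theorem mangoldt_single (p : P) {k : ℕ} (hk : k ≠ 0) :
    mangoldt N (Finsupp.single p k) = Real.log (N p) := by
  simp [mangoldt, Finsupp.support_single, hk]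

theorem exists_eq_single_of_mangoldt_ne_zero {n : P →₀ ℕ} (hn : mangoldt N n ≠ 0) :
    ∃ p k, k ≠ 0 ∧ n = Finsupp.single p k := by
  obtain ⟨p, hp, hne⟩ := Finset.exists_ne_zero_of_sum_ne_zero hn
  have hsupp : n.support = {p} := by_contra fun h => hne (if_neg h)
  exact ⟨p, n p, Finsupp.mem_support_iff.1 hp, Finsupp.support_subset_singleton.1 hsupp.le⟩

theorem mangoldt_nonneg (n : P →₀ ℕ) : 0 ≤ mangoldt N n :=
  Finset.sum_nonneg fun p _ => by
    split_ifs
    exacts [Real.log_natCast_nonneg _, le_rfl]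

theorem summable_indicator_mangoldt_div (hN : ∀ p, 2 ≤ N p)
    (hsq : Summable fun p => Real.log (N p) / (N p : ℝ) ^ 2) :
    Summable ((primeElts P)ᶜ.indicator fun n => mangoldt N n / Nm N n) := by
  have hinj : Function.Injective fun q : P × ℕ => Finsupp.single q.1 (q.2 + 2) := by
    rintro ⟨p, k⟩ ⟨p', k'⟩ h
    obtain ⟨hp, hk⟩ := (Finsupp.single_eq_single_iff _ _ _ _).1 h |>.resolve_right (by simp)
    exact Prod.ext hp (Nat.add_right_cancel hk)
  have hgeom : Summable fun q : P × ℕ => Real.log (N q.1) / (N q.1 : ℝ) ^ 2 * (1 / 2) ^ q.2 :=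
    hsq.mul_of_nonneg summable_geometric_two
      (fun p => div_nonneg (Real.log_natCast_nonneg _) (by positivity)) fun k => by positivity
  refine (hinj.summable_iff fun n hn => ?_).1 (hgeom.of_nonneg_of_le (fun q => ?_) fun q => ?_)
  · by_contra hne
    obtain ⟨hprime, hdiv⟩ := indicator_apply_ne_zero.1 hne
    obtain ⟨p, k, hk, rfl⟩ := exists_eq_single_of_mangoldt_ne_zero (div_ne_zero_iff.1 hdiv).1
    have hk1 : k ≠ 1 := by
      rintro rfl
      exact hprime ⟨p, rfl⟩
    obtain ⟨j, rfl⟩ : ∃ j, k = j + 2 := Nat.exists_eq_add_of_le' (by lia)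
    exact hn ⟨(p, j), rfl⟩
  · exact indicator_nonneg (fun n _ => div_nonneg (mangoldt_nonneg n) (Nat.cast_nonneg _)) _
  · refine (indicator_le_self' (fun n _ => div_nonneg (mangoldt_nonneg n) (Nat.cast_nonneg _))
      _).trans ?_
    have hpow : (2 : ℝ) ^ q.2 ≤ N q.1 ^ q.2 :=
      pow_le_pow_left₀ zero_le_two (Nat.ofNat_le_cast.2 (hN q.1)) _
    rw [mangoldt_single _ (Nat.succ_ne_zero _), Nm_single, Nat.cast_pow, pow_add, one_div, inv_pow,
      ← div_eq_mul_inv, div_div, mul_comm (_ ^ 2)]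
    refine div_le_div_of_nonneg_left (Real.log_natCast_nonneg _) ?_
      (mul_le_mul_of_nonneg_right hpow (by positivity))
    exact mul_pos (by positivity) (pow_pos (Nat.cast_pos.2 (two_pos.trans_le (hN _))) _)

variable [Northcott N] [Northcott (Nm N)]

theorem sum_mangoldt_div_eq (x : ℝ) :
    ∑ n ∈ normLE (Nm N) x, mangoldt N n / Nm N n =
      ∑ p ∈ normLE N x, Real.log (N p) / N p + ∑ n ∈ normLE (Nm N) x,
        (primeElts P)ᶜ.indicator (fun n => mangoldt N n / Nm N n) n := by
  have hprime : ∑ p ∈ normLE N x, Real.log (N p) / N p = ∑ n ∈ normLE (Nm N) x,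
      (primeElts P).indicator (fun n => mangoldt N n / Nm N n) n := by
    refine Finset.sum_of_injOn (fun p => Finsupp.single p 1)
      (Finsupp.single_left_injective one_ne_zero).injOn (fun p hp => ?_) (fun n hn hn' => ?_)
      fun p _ => ?_
    · simpa [Nm_single] using hp
    · refine indicator_of_notMem ?_ _
      rintro ⟨p, rfl⟩
      exact hn' ⟨p, by simpa [Nm_single] using hn, rfl⟩
    · rw [indicator_of_mem (s := primeElts P) (mem_range_self p), mangoldt_single p one_ne_zero,
        Nm_single, pow_one]
  rw [hprime, ← Finset.sum_add_distrib]
  exact Finset.sum_congr rfl fun n _ => (congrFun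
    (indicator_self_add_compl (primeElts P) fun n => mangoldt N n / Nm N n) n).symm

theorem isBigO_sum_log_prime_div {κ θ : ℝ} (hcount : HasLinearCount (Nm N) κ θ)
    (hN : ∀ p, 2 ≤ N p) (hκ : κ ≠ 0) (hθ : θ < 1) :
    (fun x => ∑ p ∈ normLE N x, Real.log (N p) / N p - Real.log x) =O[𝓟 (Ici 1)]
      fun _ => (1 : ℝ) := by
  have hsq : Summable fun p => Real.log (N p) / (N p : ℝ) ^ 2 := by
    have := summable_log_mul_prime_rpow_neg hcount hθ.le one_lt_two
    simpa [div_eq_mul_inv, Real.rpow_neg] using this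
  have hsum := summable_indicator_mangoldt_div hN hsq
  have hpowers : (fun x => ∑ n ∈ normLE (Nm N) x, (primeElts P)ᶜ.indicator
      (fun n => mangoldt N n / Nm N n) n) =O[𝓟 (Ici 1)] fun _ => (1 : ℝ) :=
    isBigO_principal.2 ⟨_, fun x _ => by
      rw [norm_one, mul_one]
      exact (norm_sum_le _ _).trans (hsum.norm.sum_le_tsum _ fun _ _ => norm_nonneg _)⟩
  refine ((isBigO_sum_mangoldt_div hcount hN hκ hθ).sub hpowers).congr_left fun x => ?_
  rw [sum_mangoldt_div_eq]
  ring

end PrimeSums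

section MertensSecond

open Set

variable {ι : Type*} {ν : ι → ℕ} [Northcott ν]

theorem exists_abs_sum_inv_sub_log_log_sub_le (hν : ∀ i, 2 ≤ ν i)
    (hlog : (fun x => ∑ i ∈ normLE ν x, Real.log (ν i) / ν i - Real.log x) =O[𝓟 (Ici 1)]
      fun _ => (1 : ℝ)) :
    ∃ C, ∀ x y, 2 ≤ x → x ≤ y → |(∑ i ∈ normLE ν y, 1 / (ν i : ℝ) - Real.log (Real.log y))
      - (∑ i ∈ normLE ν x, 1 / (ν i : ℝ) - Real.log (Real.log x))| ≤ 2 * (C * (Real.log x)⁻¹) := by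
  obtain ⟨C, hC⟩ := isBigO_principal.1 hlog
  refine ⟨C, fun x y hx hxy => ?_⟩
  have hlog_pos : ∀ t : ℝ, 2 ≤ t → 0 < Real.log t := fun t ht => Real.log_pos (by linarith)
  have hlogt : ∀ t ∈ Icc x y, 0 < Real.log t := fun t ht => hlog_pos t (hx.trans ht.1)
  have ht0 : ∀ t ∈ Icc x y, 0 < t := fun t ht => by linarith [ht.1]
  have hcont : ContinuousOn Real.log (Icc x y) :=
    Real.continuousOn_log.mono fun t ht => (ht0 t ht).ne'
  have hderiv : ∀ t ∈ Icc x y, HasDerivAt (fun t => (Real.log t)⁻¹) (-t⁻¹ / Real.log t ^ 2) t :=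
    fun t ht => (Real.hasDerivAt_log (ht0 t ht).ne').inv (hlogt t ht).ne'
  have hweight : ∀ i, (Real.log (ν i))⁻¹ * (Real.log (ν i) / ν i) = 1 / (ν i : ℝ) := fun i => by
    rw [← mul_div_assoc, inv_mul_cancel₀ (hlog_pos _ (Nat.ofNat_le_cast.2 (hν i))).ne']
  have hR : ∀ t ∈ Icc x y, |∑ i ∈ normLE ν t, Real.log (ν i) / ν i - Real.log t| ≤ C :=
    fun t ht => by simpa using hC t (one_le_two.trans (hx.trans ht.1))
  have := abs_sum_normLE_mul_sub_sub_le (ν := ν) (fun i => Real.log (ν i) / ν i)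
    (Φ := fun t => Real.log (Real.log t)) (B := fun t => C * (Real.log t)⁻¹)
    (zero_le_two.trans hx) hxy hderiv ?_ (fun t ht => Real.hasDerivAt_log (ht0 t ht).ne')
    (fun t ht => ?_) (fun t ht => (hderiv t ht).const_mul C) (fun t ht => ?_) fun t ht => ?_
  · simpa only [hweight] using this
  · exact (continuousOn_id.inv₀ fun t ht => (ht0 t ht).ne').neg.div (hcont.pow 2)
      fun t ht => pow_ne_zero 2 (hlogt t ht).ne'
  · exact ((Real.hasDerivAt_log (ht0 t ht).ne').log (hlogt t ht).ne').congr_deriv (by ring)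
  · rw [abs_mul, abs_of_pos (inv_pos.2 (hlogt t ht)), mul_comm]
    exact mul_le_mul_of_nonneg_right (hR t ht) (inv_nonneg.2 (hlogt t ht).le)
  · have hnonneg : 0 ≤ t⁻¹ / Real.log t ^ 2 := div_nonneg (inv_nonneg.2 (ht0 t ht).le) (sq_nonneg _)
    rw [abs_mul, neg_div, abs_neg, abs_of_nonneg hnonneg, mul_neg, neg_neg, mul_comm]
    exact mul_le_mul_of_nonneg_right (hR t ht) hnonneg

theorem isBigO_sum_inv_sub_log_log_sub (hν : ∀ i, 2 ≤ ν i)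
    (hlog : (fun x => ∑ i ∈ normLE ν x, Real.log (ν i) / ν i - Real.log x) =O[𝓟 (Ici 1)]
      fun _ => (1 : ℝ)) {A : ℝ} (hA : IsMertens ν A) :
    (fun y => ∑ i ∈ normLE ν y, 1 / (ν i : ℝ) - Real.log (Real.log y) - A)
      =O[atTop] fun y => 1 / Real.log y := by
  obtain ⟨C, hdiff⟩ := exists_abs_sum_inv_sub_log_log_sub_le hν hlog
  simp only [IsMertens, finsum_mem_norm_le] at hA
  refine IsBigO.of_bound (2 * C) ?_
  filter_upwards [eventually_ge_atTop 2] with y hy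
  rw [one_div, Real.norm_of_nonneg (inv_nonneg.2 (Real.log_nonneg (by linarith))), mul_assoc]
  exact abs_sub_le_of_tendsto hdiff hA hy

theorem isBigO_sum_normLE_sub_tsum (hν : ∀ i, 2 ≤ ν i) {l : ι → ℝ}
    (hl : Summable fun i => Real.log (ν i) * |l i|) :
    (fun y => ∑ i ∈ normLE ν y, l i - ∑' i, l i) =O[atTop] fun y => 1 / Real.log y := by
  have hlog2 : 0 < Real.log 2 := Real.log_pos one_lt_two
  have hlogν : ∀ i, Real.log 2 ≤ Real.log (ν i) := fun i =>
    Real.log_le_log two_pos (Nat.ofNat_le_cast.2 (hν i))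
  have habs : Summable fun i => |l i| :=
    (hl.mul_left (Real.log 2)⁻¹).of_nonneg_of_le (fun i => abs_nonneg _) fun i => by
      rw [le_inv_mul_iff₀ hlog2]
      exact mul_le_mul_of_nonneg_right (hlogν i) (abs_nonneg _)
  refine IsBigO.of_bound (∑' i, Real.log (ν i) * |l i|) ?_
  filter_upwards [eventually_gt_atTop 1] with y hy
  have hlogy : 0 < Real.log y := Real.log_pos hy
  have htail : ∀ i : {i // i ∉ normLE ν y}, |l i| ≤ (Real.log y)⁻¹ * (Real.log (ν i) * |l i|) :=
    fun i => by
      have hi : y < ν i := not_le.1 fun h => i.2 (mem_normLE.2 h)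
      rw [le_inv_mul_iff₀ hlogy]
      exact mul_le_mul_of_nonneg_right (Real.log_le_log (by linarith) hi.le) (abs_nonneg _)
  rw [← habs.of_abs.sum_add_tsum_subtype_compl (normLE ν y), sub_add_cancel_left, norm_neg,
    one_div, Real.norm_of_nonneg (inv_nonneg.2 hlogy.le), mul_comm]
  calc ‖∑' i : {i // i ∉ normLE ν y}, l i‖
    _ ≤ ∑' i : {i // i ∉ normLE ν y}, |l i| := norm_tsum_le_tsum_norm (habs.subtype _)
    _ ≤ ∑' i : {i // i ∉ normLE ν y}, (Real.log y)⁻¹ * (Real.log (ν i) * |l i|) :=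
      (habs.subtype _).tsum_le_tsum htail ((hl.subtype _).mul_left _)
    _ = (Real.log y)⁻¹ * ∑' i : {i // i ∉ normLE ν y}, Real.log (ν i) * |l i| := tsum_mul_left
    _ ≤ (Real.log y)⁻¹ * ∑' i, Real.log (ν i) * |l i| :=
      mul_le_mul_of_nonneg_left (hl.tsum_subtype_le _ _ fun i =>
        mul_nonneg (Real.log_natCast_nonneg _) (abs_nonneg _)) (inv_nonneg.2 hlogy.le)

end MertensSecond

section FullPrimeSum

theorem isBigO_comp_rpow_sub_log_log {F : ℝ → ℝ} {c a : ℝ} (ha : 0 < a)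
    (hF : (fun y => F y - Real.log (Real.log y) - c) =O[atTop] fun y => 1 / Real.log y) :
    (fun x => F (x ^ a) - Real.log (Real.log x) - (c + Real.log a)) =O[atTop]
      fun x => 1 / Real.log x := by
  have hlog : ∀ᶠ x : ℝ in atTop, Real.log (x ^ a) = a * Real.log x := by
    filter_upwards [eventually_gt_atTop 0] with x hx using Real.log_rpow hx a
  refine ((hF.comp_tendsto (tendsto_rpow_atTop ha)).congr' ?_ ?_).trans
    (isBigO_const_mul_self a⁻¹ (fun x => 1 / Real.log x) _)
  · filter_upwards [hlog, eventually_gt_atTop 1] with x hlogx hx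
    rw [Function.comp_apply, hlogx, Real.log_mul ha.ne' (Real.log_pos hx).ne']
    ring
  · filter_upwards [hlog] with x hlogx
    rw [Function.comp_apply, hlogx, one_div, one_div, mul_inv]

theorem one_sub_two_rpow_neg_pos {a : ℝ} (ha : 0 < a) : 0 < 1 - (2 : ℝ) ^ (-a) :=
  sub_pos.2 (Real.rpow_lt_one_of_one_lt_of_neg one_lt_two (neg_neg_of_pos ha))

theorem mul_le_sub_rpow_add_one {a q : ℝ} (ha : 0 ≤ a) (hq : 2 ≤ q) :
    (1 - 2 ^ (-a)) * q ≤ q - q ^ (1 - a) + 1 := by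
  have hq0 : 0 < q := two_pos.trans_le hq
  have hrpow : q ^ (1 - a) ≤ q * 2 ^ (-a) := by
    rw [sub_eq_add_neg, Real.rpow_add hq0, Real.rpow_one]
    exact mul_le_mul_of_nonneg_left
      (Real.rpow_le_rpow_of_nonpos two_pos hq (neg_nonpos.2 ha)) hq0.le
  linarith

theorem sub_rpow_add_one_pos {a q : ℝ} (ha : 0 < a) (hq : 2 ≤ q) : 0 < q - q ^ (1 - a) + 1 :=
  (mul_pos (one_sub_two_rpow_neg_pos ha) (two_pos.trans_le hq)).trans_le
    (mul_le_sub_rpow_add_one ha.le hq)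

theorem one_div_mul_one_sub_rpow_add_inv {a q : ℝ} (ha : 0 < a) (hq : 2 ≤ q) :
    1 / (q * (1 - q ^ (-a) + q⁻¹)) =
      1 / q + 1 / (q ^ a * (q - q ^ (1 - a) + 1)) - 1 / (q ^ (1 : ℝ) * (q - q ^ (1 - a) + 1)) := by
  have hq0 : 0 < q := two_pos.trans_le hq
  have hD := sub_rpow_add_one_pos ha hq
  have hrpow : q ^ (1 - a) = q / q ^ a := by rw [Real.rpow_sub hq0, Real.rpow_one]
  have hdenom : q * (1 - q ^ (-a) + q⁻¹) = q - q ^ (1 - a) + 1 := by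
    rw [hrpow, Real.rpow_neg hq0.le, mul_add, mul_inv_cancel₀ hq0.ne']
    ring
  rw [hdenom, Real.rpow_one]
  field_simp
  rw [hrpow]
  field_simp
  ring

variable {ι : Type*} {ν : ι → ℕ}

theorem summable_log_mul_one_div_rpow_mul (hν : ∀ i, 2 ≤ ν i) {a b : ℝ} (ha : 0 < a)
    (hsum : Summable fun i => Real.log (ν i) * (ν i : ℝ) ^ (-(1 + b))) :
    Summable fun i =>
      Real.log (ν i) * |1 / ((ν i : ℝ) ^ b * ((ν i : ℝ) - (ν i : ℝ) ^ (1 - a) + 1))| := by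
  have hc := one_sub_two_rpow_neg_pos ha
  refine (hsum.mul_left (1 - (2 : ℝ) ^ (-a))⁻¹).of_nonneg_of_le
    (fun i => mul_nonneg (Real.log_natCast_nonneg _) (abs_nonneg _)) fun i => ?_
  have hi : (2 : ℝ) ≤ ν i := Nat.ofNat_le_cast.2 (hν i)
  have hi0 : (0 : ℝ) < ν i := two_pos.trans_le hi
  have hib : 0 < (ν i : ℝ) ^ b := Real.rpow_pos_of_pos hi0 b
  rw [mul_left_comm, abs_of_pos (one_div_pos.2 (mul_pos hib (sub_rpow_add_one_pos ha hi)))]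
  refine mul_le_mul_of_nonneg_left ?_ (Real.log_natCast_nonneg _)
  rw [Real.rpow_neg hi0.le, Real.rpow_add hi0, Real.rpow_one, ← mul_inv, ← one_div]
  refine one_div_le_one_div_of_le (by positivity) ?_
  calc (1 - 2 ^ (-a)) * (ν i * (ν i : ℝ) ^ b)
    _ = (ν i : ℝ) ^ b * ((1 - 2 ^ (-a)) * ν i) := by ring
    _ ≤ (ν i : ℝ) ^ b * (ν i - (ν i : ℝ) ^ (1 - a) + 1) :=
      mul_le_mul_of_nonneg_left (mul_le_sub_rpow_add_one ha.le hi) hib.le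

theorem isBigO_sum_one_div_mul_one_sub_rpow_add_inv [Northcott ν] (hν : ∀ i, 2 ≤ ν i)
    (hsum : ∀ s : ℝ, 1 < s → Summable fun i => Real.log (ν i) * (ν i : ℝ) ^ (-s)) {A a : ℝ}
    (hA : (fun y => ∑ i ∈ normLE ν y, 1 / (ν i : ℝ) - Real.log (Real.log y) - A)
      =O[atTop] fun y => 1 / Real.log y) (ha : 0 < a) :
    (fun y => ∑ i ∈ normLE ν y, 1 / ((ν i : ℝ) * (1 - (ν i : ℝ) ^ (-a) + (ν i : ℝ)⁻¹))
      - Real.log (Real.log y)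
      - (A + ∑' i, 1 / ((ν i : ℝ) ^ a * ((ν i : ℝ) - (ν i : ℝ) ^ (1 - a) + 1))
        - ∑' i, 1 / ((ν i : ℝ) ^ (1 : ℝ) * ((ν i : ℝ) - (ν i : ℝ) ^ (1 - a) + 1))))
      =O[atTop] fun y => 1 / Real.log y := by
  have htail : ∀ b : ℝ, 0 < b → _ := fun b hb => isBigO_sum_normLE_sub_tsum hν
    (summable_log_mul_one_div_rpow_mul hν ha (hsum (1 + b) (lt_add_of_pos_right 1 hb)))
  refine ((hA.add (htail a ha)).sub (htail 1 one_pos)).congr_left fun y => ?_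
  simp only [one_div_mul_one_sub_rpow_add_inv ha (Nat.ofNat_le_cast.2 (hν _)),
    Finset.sum_add_distrib, Finset.sum_sub_distrib]
  ring

theorem D1const_eq (ν : ι → ℕ) {h : ℕ} (hh : h ≠ 0) (A : ℝ) :
    D1const ν h A = A
      + ∑' i, 1 / ((ν i : ℝ) ^ (1 / (h : ℝ)) * ((ν i : ℝ) - (ν i : ℝ) ^ (1 - 1 / (h : ℝ)) + 1))
      - ∑' i, 1 / ((ν i : ℝ) ^ (1 : ℝ) * ((ν i : ℝ) - (ν i : ℝ) ^ (1 - 1 / (h : ℝ)) + 1))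
      + Real.log (1 / (h : ℝ)) := by
  have hh0 : (h : ℝ) ≠ 0 := Nat.cast_ne_zero.2 hh
  have hexp : ((h : ℝ) + 1) / h - 1 = 1 / h := by rw [add_div, div_self hh0, add_sub_cancel_left]
  have hexp' : 2 * (h : ℝ) / h - 1 = 1 := by
    rw [mul_div_cancel_right₀ _ hh0]
    norm_num
  rw [D1const, LhSum, LhSum, hexp, hexp', one_div (h : ℝ), Real.log_inv]
  ring

end FullPrimeSum

/-- Mertens-type estimate for the weighted prime sum arising in the `h`-full
first moment. -/
theorem hfull_prime_sum {P : Type*} [Countable P] (N : P → ℕ)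
    (hN : ∀ p, 2 ≤ N p) (κ θ : ℝ) (hstar : StarCond N κ θ)
    (A : ℝ) (hA : IsMertens N A) (h : ℕ) (hh : 2 ≤ h) :
    (fun x : ℝ =>
        (∑ᶠ p ∈ {p : P | (N p : ℝ) ≤ x ^ (1 / (h : ℝ))},
            1 / ((N p : ℝ) *
              (1 - (N p : ℝ) ^ (-(1 / (h : ℝ))) + ((N p : ℝ))⁻¹)))
          - Real.log (Real.log x) - D1const N h A)
      =O[atTop] fun x : ℝ => 1 / Real.log x := by
  have hh0 : h ≠ 0 := (two_pos.trans_le hh).ne'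
  have hpos : 0 < 1 / (h : ℝ) := one_div_pos.2 (Nat.cast_pos.2 hh0.bot_lt)
  have hθ : θ < 1 := hstar.2.2.1
  have := hstar.northcott
  have := northcott_of_northcott_Nm (N := N)
  have hcount := hstar.hasLinearCount
  have hmertens₁ := isBigO_sum_log_prime_div hcount hN hstar.1.ne' hθ
  have hmertens₂ := isBigO_sum_inv_sub_log_log_sub hN hmertens₁ hA
  have hfull := isBigO_sum_one_div_mul_one_sub_rpow_add_inv hN
    (fun _ hs => summable_log_mul_prime_rpow_neg hcount hθ.le hs) hmertens₂ hpos
  simp only [finsum_mem_norm_le, D1const_eq N hh0]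
  exact isBigO_comp_rpow_sub_log_log hpos hfull
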